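/- Let n ≥ 1 and let f : C^{gp}_n(M;ℤ)_G → A be a group n-cocycle, i.e. a homomorphism with f ∘ ∂^{gp}_{n+1} = 0. Then Φ_f := f ∘ ψ_n ∘ γ_n : C^{BR}_n(X;ℤ) → A is a birack n-cocycle of the G-Alexander biquandle X, i.e. Φ_f ∘ ∂^{BR}_{n+1} = 0. -/

import Mathlib

open FreeAbelianGroup
open scoped TensorProduct

namespace GAlex

variable {G M A : Type*} [Group G] [AddCommGroup M] [DistribMulAction Gᵐᵒᵖ M] [AddCommGroup A]

/-- The right action `m · g` of a group element `g : G` on `m : M`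
(coming from the right `ℤ[G]`-module structure on `M`). -/
def ract (m : M) (g : G) : M := MulOpposite.op g • m

variable (φ : G →* G)

/-- The operation `(m,g) ⊳ (n,h) = (mh + n(φ(h) − h), h⁻¹gh)` of the `G`-Alexander biquandle. -/
def under (x y : M × G) : M × G :=
  (ract x.1 y.2 + ract y.1 (φ y.2) - ract y.1 y.2, y.2⁻¹ * x.2 * y.2)

/-- The operation `(m,g) ⊚ (n,h) = (mφ(h), g)` of the `G`-Alexander biquandle. -/
def overOp (x y : M × G) : M × G := (ract x.1 (φ y.2), x.2)

/-- The face `g_{⟨p⟩}` (delete the `p`-th entry). -/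
def dGdel (n : ℕ) (p : Fin (n + 1)) (g : Fin (n + 1) → G) : Fin n → G :=
  fun j => g (p.succAbove j)

/-- The face `g_{⟨⊲p⟩}` (conjugate the first entries by `g p` and delete the `p`-th entry). -/
def dGconj (n : ℕ) (p : Fin (n + 1)) (g : Fin (n + 1) → G) : Fin n → G :=
  fun j => if (j : ℕ) < (p : ℕ) then (g p)⁻¹ * g j.castSucc * g p else g j.succ

/-- The face `m_{⟨p⟩}` (merge the two entries adjacent to position `p`;
for `p = 0` drop the first entry). -/
def dMmer (n : ℕ) (p : Fin (n + 1)) (m : Fin (n + 1) → M) : Fin n → M :=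
  fun j =>
    if (j : ℕ) + 1 < (p : ℕ) then m j.castSucc
    else if (j : ℕ) + 1 = (p : ℕ) then m j.castSucc + m j.succ
    else m j.succ

/-- The face `m_{⟨⊲p⟩}`. -/
def dMconj (n : ℕ) (p : Fin (n + 1)) (g : Fin (n + 1) → G) (m : Fin (n + 1) → M) : Fin n → M :=
  fun j =>
    if (j : ℕ) + 1 < (p : ℕ) then ract (m j.castSucc) (g p)
    else if (j : ℕ) + 1 = (p : ℕ) then ract (m j.castSucc) (g p) + ract (m j.succ) (φ (g p))
    else ract (m j.succ) (φ (g p))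

/-- The boundary map `∂^{BR_U}_{n+1} : C^{BR_U}_{n+1}(X;ℤ) → C^{BR_U}_n(X;ℤ)`
(the boundary `∂^{BR_U}_k` is `0` for `k ≤ 1`, which agrees with this formula at `n = 0`). -/
def dBRU (n : ℕ) :
    FreeAbelianGroup ((Fin (n + 1) → G) × (Fin (n + 1) → M)) →+
      FreeAbelianGroup ((Fin n → G) × (Fin n → M)) :=
  FreeAbelianGroup.lift fun x =>
    ∑ p : Fin (n + 1),
      (-1 : ℤ) ^ (p : ℕ) •
        (FreeAbelianGroup.of (dGdel n p x.1, dMmer n p x.2) -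
          FreeAbelianGroup.of (dGconj n p x.1, dMconj φ n p x.1 x.2))

/-- The birack boundary map `∂^{BR}_{n+1} : C^{BR}_{n+1}(X;ℤ) → C^{BR}_n(X;ℤ)`
for the `G`-Alexander biquandle `X = M × G` (with trivial `X`-set). -/
def dBR (n : ℕ) :
    FreeAbelianGroup (Fin (n + 1) → M × G) →+ FreeAbelianGroup (Fin n → M × G) :=
  FreeAbelianGroup.lift fun x =>
    ∑ p : Fin (n + 1),
      (-1 : ℤ) ^ (p : ℕ) •
        (FreeAbelianGroup.of (fun j => x (p.succAbove j)) -
          FreeAbelianGroup.of (fun j : Fin n =>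
            if (j : ℕ) < (p : ℕ) then under φ (x j.castSucc) (x p)
            else overOp φ (x j.succ) (x p)))

/-- `γ_n((m₁,g₁),…,(m_n,g_n)) = (g₁,…,g_n; m₁−m₂, …, m_{n−1}−m_n, m_n)`. -/
def gammaMap (n : ℕ) :
    FreeAbelianGroup (Fin n → M × G) →+ FreeAbelianGroup ((Fin n → G) × (Fin n → M)) :=
  FreeAbelianGroup.lift fun x =>
    FreeAbelianGroup.of
      (fun j => (x j).2,
       fun j => (x j).1 - if h : (j : ℕ) + 1 < n then (x ⟨(j : ℕ) + 1, h⟩).1 else 0)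

/-- `r_n(g₁,…,g_n; m₁,…,m_n) = ((m₁+⋯+m_n, g₁), (m₂+⋯+m_n, g₂), …, (m_n, g_n))`. -/
def rMap (n : ℕ) :
    FreeAbelianGroup ((Fin n → G) × (Fin n → M)) →+ FreeAbelianGroup (Fin n → M × G) :=
  FreeAbelianGroup.lift fun p =>
    FreeAbelianGroup.of fun j => ((∑ i ∈ Finset.Ici j, p.2 i), p.1 j)

/-- The boundary map `∂^{BR_U}_{d+1}` of `C^{BR_U}_*(X;ℤ)_X` (the version with `X`-set `X`,
whose degree-`d` chain group is free on `(1+d)`-tuples); it is `0` in degrees `≤ 1`. -/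
def dBRUX : (d : ℕ) →
    FreeAbelianGroup ((Fin (d + 2) → G) × (Fin (d + 2) → M)) →+
      FreeAbelianGroup ((Fin (d + 1) → G) × (Fin (d + 1) → M))
  | 0 => 0
  | d + 1 =>
    FreeAbelianGroup.lift fun x =>
      ∑ i : Fin (d + 2),
        (-1 : ℤ) ^ (i : ℕ) •
          (FreeAbelianGroup.of (dGdel (d + 2) i.succ x.1, dMmer (d + 2) i.succ x.2) -
            FreeAbelianGroup.of (dGconj (d + 2) i.succ x.1, dMconj φ (d + 2) i.succ x.1 x.2))

/-- The boundary map `∂^{BR}_{d+1}` of `C^{BR}_*(X;ℤ)_X` (the version with `X`-set `X`);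
it is `0` in degrees `≤ 1`. -/
def dBRX : (d : ℕ) →
    FreeAbelianGroup (Fin (d + 2) → M × G) →+ FreeAbelianGroup (Fin (d + 1) → M × G)
  | 0 => 0
  | d + 1 =>
    FreeAbelianGroup.lift fun x =>
      ∑ i : Fin (d + 2),
        (-1 : ℤ) ^ (i : ℕ) •
          (FreeAbelianGroup.of (fun j => x (i.succ.succAbove j)) -
            FreeAbelianGroup.of (fun j : Fin (d + 2) =>
              if (j : ℕ) < (i : ℕ) + 1 then under φ (x j.castSucc) (x i.succ)
              else overOp φ (x j.succ) (x i.succ)))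


/-- The subgroup of `G`-coinvariants relations in `C^{gp}_n(M;ℤ)`:
generated by all `(m₁g,…,m_ng) − (m₁,…,m_n)`. -/
def coinvSub (n : ℕ) : AddSubgroup (FreeAbelianGroup (Fin n → M)) :=
  AddSubgroup.closure
    {z | ∃ (m : Fin n → M) (g : G),
        z = FreeAbelianGroup.of (fun i => ract (m i) g) - FreeAbelianGroup.of m}

/-- The coinvariant group chain group `C^{gp}_n(M;ℤ)_G`. -/
abbrev CgpG (n : ℕ) : Type _ :=
  FreeAbelianGroup (Fin n → M) ⧸ coinvSub (G := G) (M := M) n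

/-- The group-homology boundary map `∂^{gp}_{n+1} : C^{gp}_{n+1}(M;ℤ) → C^{gp}_n(M;ℤ)`
(it is `0` in degrees `≤ 1`, which agrees with this formula at `n = 0`). -/
def dgp (n : ℕ) :
    FreeAbelianGroup (Fin (n + 1) → M) →+ FreeAbelianGroup (Fin n → M) :=
  FreeAbelianGroup.lift fun m =>
    (∑ p : Fin (n + 1), (-1 : ℤ) ^ (p : ℕ) • FreeAbelianGroup.of (dMmer n p m)) +
      (-1 : ℤ) ^ (n + 1) • FreeAbelianGroup.of fun j : Fin n => m j.castSucc

/-- `|k| = k₁ + ⋯ + k_n`. -/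
def wt {n : ℕ} (k : Fin n → Bool) : ℕ := ∑ i, if k i then 1 else 0

/-- `g_{k,i} = φ(g₀^{k₀} ⋯ g_i^{k_i}) · g_{i+1}^{k_{i+1}} ⋯ g_{n-1}^{k_{n-1}}`
(indices written `0`-based; the products are ordered). -/
def gki {n : ℕ} (g : Fin n → G) (k : Fin n → Bool) (i : Fin n) : G :=
  φ ((((List.finRange n).filter fun j => decide (j ≤ i)).map
        fun j => if k j then g j else 1).prod) *
    (((List.finRange n).filter fun j => decide (i < j)).map
        fun j => if k j then g j else 1).prod

/-- The value of `ψ` on a generator: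
`Σ_{k, k₀ = 0} (−1)^{|k|} (m₀ g_{k,0}, …, m_n g_{k,n})`, as an element of the free
abelian group (before passing to coinvariants). -/
def psiVal (n : ℕ) (x : (Fin (n + 1) → G) × (Fin (n + 1) → M)) :
    FreeAbelianGroup (Fin (n + 1) → M) :=
  ∑ k ∈ Finset.univ.filter fun k : Fin (n + 1) → Bool => k 0 = false,
    (-1 : ℤ) ^ wt k • FreeAbelianGroup.of fun i => ract (x.2 i) (gki φ x.1 k i)

/-- `ψ` as a homomorphism into the free abelian group (before coinvariants). -/
def psiFree (n : ℕ) :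
    FreeAbelianGroup ((Fin (n + 1) → G) × (Fin (n + 1) → M)) →+
      FreeAbelianGroup (Fin (n + 1) → M) :=
  FreeAbelianGroup.lift (psiVal φ n)

/-- The homomorphism `ψ : C^{BR_U} → C^{gp}(M;ℤ)_G`. -/
def psiG (n : ℕ) :
    FreeAbelianGroup ((Fin (n + 1) → G) × (Fin (n + 1) → M)) →+
      CgpG (G := G) (M := M) (n + 1) :=
  (QuotientAddGroup.mk' (coinvSub (G := G) (M := M) (n + 1))).comp (psiFree φ n)

/-- The homomorphism `ψ_{•,λ}`, sending a generator `x` to `ψ(x) ⊗ λ(x₁)` where `x₁` is the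
first `G`-entry of `x`. -/
noncomputable def psiLam (lam : G → A) (n : ℕ) :
    FreeAbelianGroup ((Fin (n + 1) → G) × (Fin (n + 1) → M)) →+
      TensorProduct ℤ (CgpG (G := G) (M := M) (n + 1)) A :=
  FreeAbelianGroup.lift fun x =>
    (QuotientAddGroup.mk' (coinvSub (G := G) (M := M) (n + 1)) (psiVal φ n x)) ⊗ₜ[ℤ]
      lam (x.1 0)

/-- `D^{gp}_n(M;ℤ)_G`: the image in the coinvariants of the subgroup generated by tuples
with a vanishing entry in a position `1 ≤ i ≤ n−1`. -/
def DgpGsub (n : ℕ) : AddSubgroup (CgpG (G := G) (M := M) n) :=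
  (AddSubgroup.closure
      {z : FreeAbelianGroup (Fin n → M) |
        ∃ (m : Fin n → M) (i : Fin n),
          (i : ℕ) + 1 < n ∧ m i = 0 ∧ z = FreeAbelianGroup.of m}).map
    (QuotientAddGroup.mk' (coinvSub (G := G) (M := M) n))

/-- The list-product form of `gki`. -/
def GK {n : ℕ} (h : Fin n → G) (i : Fin n) : G :=
  (List.ofFn fun j => if j ≤ i then φ (h j) else h j).prod

lemma gki_aux {n : ℕ} (h : Fin n → G) (i : Fin n) :
    φ ((((List.finRange n).filter fun j => decide (j ≤ i)).map h).prod) *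
    (((List.finRange n).filter fun j => decide (i < j)).map h).prod = GK φ h i := by
  induction n with
  | zero => exact i.elim0
  | succ n ih =>
    unfold GK
    rw [List.finRange_succ, List.ofFn_succ]
    induction i using Fin.cases with
    | zero =>
      simp [List.filter_map, Function.comp_def, List.ofFn_eq_map]
    | succ i =>
      have := ih (fun j => h j.succ) i
      unfold GK at this
      simp only [List.filter_cons, Fin.zero_le, decide_true, if_true, List.map_cons,
        List.prod_cons, map_mul, List.filter_map, Function.comp_def, Fin.succ_le_succ_iff,
        Fin.succ_lt_succ_iff, List.map_map, Fin.not_lt_zero, decide_false, Bool.false_eq_true,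
        if_false] at this ⊢
      rw [← this, mul_assoc]

lemma gki_eq {n : ℕ} (g : Fin n → G) (k : Fin n → Bool) (i : Fin n) :
    gki φ g k i = GK φ (fun j => if k j then g j else 1) i :=
  gki_aux φ _ i

/-- Conjugate the first `p` entries by `c`. -/
def cj {n : ℕ} (p : Fin (n + 1)) (c : G) (h : Fin n → G) : Fin n → G :=
  fun j => if (j : ℕ) < (p : ℕ) then c⁻¹ * h j * c else h j

lemma prod_insertNth {n : ℕ} (p : Fin (n + 1)) (c : G) (e : Fin n → G) :
    (List.ofFn (p.insertNth (α := fun _ => G) c e)).prod = c * (List.ofFn (cj p c e)).prod := by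
  induction n with
  | zero =>
    have : p = 0 := Fin.ext (by have := p.2; simp only [Fin.val_zero]; omega)
    subst this
    simp [List.ofFn_succ]
  | succ n ih =>
    induction p using Fin.cases with
    | zero =>
      rw [Fin.insertNth_zero', List.ofFn_succ]
      simp [cj]
    | succ p =>
      have := ih p (fun j => e j.succ)
      rw [List.ofFn_succ, List.ofFn_succ (f := cj _ _ _)]
      have h1 : ∀ i : Fin (n + 1), (p.succ.insertNth (α := fun _ => G) c e) i.succ =
          p.insertNth (α := fun _ => G) c (fun j => e j.succ) i := by
        intro i
        induction i using Fin.succAboveCases p with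
        | x => simp
        | p j =>
          have := Fin.insertNth_apply_succAbove (α := fun _ => G) p.succ c e j.succ
          rw [Fin.succ_succAbove_succ] at this
          rw [this]; simp
      have h0 : (p.succ.insertNth (α := fun _ => G) c e) 0 = e 0 := by
        have := Fin.insertNth_apply_succAbove (α := fun _ => G) p.succ c e 0
        simpa using this
      have h2 : ∀ i : Fin n, cj p.succ c e i.succ = cj p c (fun j => e j.succ) i := by
        intro i; simp [cj]
      simp only [List.prod_cons, h1, h0, h2, this]
      have h3 : cj p.succ c e 0 = c⁻¹ * e 0 * c := by simp [cj]
      rw [h3]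
      group

lemma GK_insert_lt (hφ : ∀ g : G, φ g ∈ Subgroup.center G) {n : ℕ} (p : Fin (n + 1)) (c : G)
    (h : Fin n → G) (i : Fin n) (hi : (i : ℕ) < p) :
    GK φ (p.insertNth (α := fun _ => G) c h) i.castSucc = c * GK φ (cj p c h) i := by
  have key : (fun j => if j ≤ i.castSucc then φ (p.insertNth (α := fun _ => G) c h j)
      else p.insertNth (α := fun _ => G) c h j) =
      p.insertNth (α := fun _ => G) c (fun j => if j ≤ i then φ (h j) else h j) := by
    funext j
    induction j using Fin.succAboveCases p with
    | x =>
      have : ¬ p ≤ i.castSucc := by simp only [Fin.le_def, Fin.val_castSucc]; omega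
      simp only [this, if_false, Fin.insertNth_apply_same]
    | p j =>
      have : p.succAbove j ≤ i.castSucc ↔ j ≤ i := by
        simp only [Fin.succAbove, Fin.le_def, Fin.lt_def]
        split_ifs with hh <;> simp at * <;> omega
      simp [this]
  unfold GK
  rw [key, prod_insertNth]
  congr 3
  funext j
  have := fun g => (Subgroup.mem_center_iff.1 (hφ g))
  simp only [cj]
  split_ifs <;> simp [mul_assoc]
  rw [← this (h j) c]; simp
  rw [this c]; simp

lemma GK_insert_ge (hφ : ∀ g : G, φ g ∈ Subgroup.center G) {n : ℕ} (p : Fin (n + 1)) (c : G)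
    (h : Fin n → G) (i : Fin n) (hi : (p : ℕ) ≤ i + 1) :
    GK φ (p.insertNth (α := fun _ => G) c h) i.succ = φ c * GK φ (cj p c h) i := by
  have key : (fun j => if j ≤ i.succ then φ (p.insertNth (α := fun _ => G) c h j)
      else p.insertNth (α := fun _ => G) c h j) =
      p.insertNth (α := fun _ => G) (φ c) (fun j => if j ≤ i then φ (h j) else cj p c h j) := by
    funext j
    induction j using Fin.succAboveCases p with
    | x =>
      have : p ≤ i.succ := by simp only [Fin.le_def, Fin.val_succ]; omega
      simp only [this, if_true, Fin.insertNth_apply_same]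
    | p j =>
      have : p.succAbove j ≤ i.succ ↔ j ≤ i := by
        simp only [Fin.succAbove, Fin.le_def, Fin.lt_def]
        split_ifs with hh <;> simp at * <;> omega
      simp only [this, Fin.insertNth_apply_succAbove]
      split_ifs with h1
      · rfl
      · have h2 : ¬ (j : ℕ) < p := by
          rw [Fin.le_def] at h1; omega
        simp only [cj, h2, if_false]
  unfold GK
  rw [key, prod_insertNth]
  congr 3
  funext j
  have := fun g => (Subgroup.mem_center_iff.1 (hφ g))
  have h3 : ∀ y, (φ c)⁻¹ * y * φ c = y := by
    intro y
    rw [mul_assoc, this c y]; simp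
  simp only [cj, h3, ite_self]
  split_ifs <;> simp
  rw [this c]; simp

lemma GK_cons {n : ℕ} (c : G) (h : Fin n → G) (i : Fin (n + 1)) :
    GK φ ((0 : Fin (n + 1)).insertNth (α := fun _ => G) c h) i =
      φ c * GK φ ((0 : Fin (n + 1)).insertNth (α := fun _ => G) 1 h) i := by
  unfold GK
  simp [List.ofFn_succ]

lemma GK_snoc {n : ℕ} (c : G) (h : Fin n → G) (i : Fin n) :
    GK φ ((Fin.last n).insertNth (α := fun _ => G) c h) i.castSucc = GK φ h i * c := by
  unfold GK
  rw [List.ofFn_succ']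
  have h1 : ¬ Fin.last n ≤ i.castSucc := by
    have := i.2
    simp only [Fin.le_def, Fin.val_castSucc, Fin.val_last]; omega
  simp only [Fin.insertNth_last', List.concat_eq_append, List.prod_append, Fin.snoc_castSucc,
    Fin.castSucc_le_castSucc_iff, Fin.snoc_last, h1, if_false, List.prod_singleton]

lemma ract_mul (m : M) (a b : G) : ract m (a * b) = ract (ract m a) b := by
  simp [ract, mul_smul]

lemma ract_one (m : M) : ract m (1 : G) = m := by simp [ract]

lemma ract_add (m m' : M) (a : G) : ract (m + m') a = ract m a + ract m' a := by
  simp [ract]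

lemma ract_sub (m m' : M) (a : G) : ract (m - m') a = ract m a - ract m' a := by
  simp [ract, smul_sub]

lemma ract_zero (a : G) : ract (0 : M) a = 0 := by
  simp [ract]

/-- Twisted merging. -/
def dW (n : ℕ) (p : Fin (n + 1)) (c : G) (m : Fin (n + 1) → M) : Fin n → M :=
  fun j =>
    if (j : ℕ) + 1 < (p : ℕ) then ract (m j.castSucc) c
    else if (j : ℕ) + 1 = (p : ℕ) then ract (m j.castSucc) c + ract (m j.succ) (φ c)
    else ract (m j.succ) (φ c)

lemma key_face (hφ : ∀ g : G, φ g ∈ Subgroup.center G) {n : ℕ} (p : Fin (n + 1)) (c : G)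
    (h : Fin n → G) (u : Fin (n + 1) → M) :
    dMmer n p (fun i => ract (u i) (GK φ (p.insertNth (α := fun _ => G) c h) i)) =
      fun i => ract (dW φ n p c u i) (GK φ (cj p c h) i) := by
  funext j
  simp only [dMmer, dW]
  split_ifs with h1 h2
  · rw [GK_insert_lt φ hφ _ _ _ _ (by omega), ract_mul]
  · rw [GK_insert_lt φ hφ _ _ _ _ (by omega), GK_insert_ge φ hφ _ _ _ _ (by omega),
      ract_add, ract_mul, ract_mul]
  · rw [GK_insert_ge φ hφ _ _ _ _ (by omega), ract_mul]

lemma wt_insert {n : ℕ} (p : Fin (n + 1)) (b : Bool) (k : Fin n → Bool) :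
    wt (p.insertNth (α := fun _ => Bool) b k) = (if b then 1 else 0) + wt k := by
  unfold wt
  rw [Fin.sum_univ_succAbove _ p]
  simp

lemma sum_split {n : ℕ} (p : Fin (n + 1)) (E : (Fin (n + 1) → Bool) → A) :
    ∑ k, (-1 : ℤ) ^ wt k • E k = ∑ k : Fin n → Bool, (-1 : ℤ) ^ wt k •
      (E (p.insertNth (α := fun _ => Bool) false k) -
        E (p.insertNth (α := fun _ => Bool) true k)) := by
  rw [← (Fin.insertNthEquiv (fun _ => Bool) p).sum_comp, Fintype.sum_prod_type]
  simp [Fin.insertNthEquiv, wt_insert, smul_sub, pow_add, add_comm, sub_eq_add_neg,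
    Finset.sum_add_distrib]

lemma sum_split' {n : ℕ} (p : Fin (n + 2)) (hp : p ≠ 0) (E : (Fin (n + 2) → Bool) → A) :
    ∑ k ∈ Finset.univ.filter (fun k : Fin (n + 2) → Bool => k 0 = false),
      (-1 : ℤ) ^ wt k • E k =
    ∑ k ∈ Finset.univ.filter (fun k : Fin (n + 1) → Bool => k 0 = false), (-1 : ℤ) ^ wt k •
      (E (p.insertNth (α := fun _ => Bool) false k) -
        E (p.insertNth (α := fun _ => Bool) true k)) := by
  rw [Finset.sum_filter, Finset.sum_filter]
  have h0 : ∀ b (k : Fin (n + 1) → Bool), p.insertNth (α := fun _ => Bool) b k 0 = k 0 := by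
    intro b k
    have := Fin.insertNth_apply_succAbove (α := fun _ => Bool) p b k 0
    rwa [Fin.succAbove_ne_zero_zero hp] at this
  have := sum_split p (fun k => if k 0 = false then E k else 0)
  simp only [h0, smul_ite, smul_zero] at this
  rw [this]
  refine Finset.sum_congr rfl fun k _ => ?_
  split_ifs <;> simp

lemma sum_split0 {n : ℕ} (E : (Fin (n + 1) → Bool) → A) :
    ∑ k ∈ Finset.univ.filter (fun k : Fin (n + 1) → Bool => k 0 = false),
      (-1 : ℤ) ^ wt k • E k =
    ∑ k : Fin n → Bool, (-1 : ℤ) ^ wt k •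
      E ((0 : Fin (n + 1)).insertNth (α := fun _ => Bool) false k) := by
  rw [Finset.sum_filter]
  have := sum_split 0 (fun k => if k 0 = false then E k else 0)
  simp only [smul_ite, smul_zero] at this
  rw [this]
  simp

lemma insert_ite {n : ℕ} (p : Fin (n + 1)) (b : Bool) (k : Fin n → Bool) (g : Fin (n + 1) → G) :
    (fun j => if p.insertNth (α := fun _ => Bool) b k j then g j else 1) =
      p.insertNth (α := fun _ => G) (if b then g p else 1)
        (fun j => if k j then g (p.succAbove j) else 1) := by
  funext j
  induction j using Fin.succAboveCases p with
  | x => simp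
  | p j => simp

lemma cj_one {n : ℕ} (p : Fin (n + 1)) (h : Fin n → G) : cj p 1 h = h := by
  funext j; simp [cj]

lemma cj_ite {n : ℕ} (p : Fin (n + 1)) (k : Fin n → Bool) (g : Fin (n + 1) → G) :
    cj p (g p) (fun j => if k j then g (p.succAbove j) else 1) =
      fun j => if k j then dGconj n p g j else 1 := by
  funext j
  simp only [cj, dGconj]
  split_ifs with h1 h2 h2
  · rw [Fin.succAbove_of_castSucc_lt]; simpa [Fin.lt_def] using h1
  · simp
  · rw [Fin.succAbove_of_le_castSucc]; simpa [Fin.le_def] using h1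
  · rfl

lemma dW_one {n : ℕ} (p : Fin (n + 1)) (u : Fin (n + 1) → M) : dW φ n p 1 u = dMmer n p u := by
  funext j; simp [dW, dMmer, ract_one]

/-- The value of `ψ` followed by a function. -/
def Psi {n : ℕ} (F : (Fin (n + 1) → M) → A) (g : Fin (n + 1) → G) (u : Fin (n + 1) → M) : A :=
  ∑ k ∈ Finset.univ.filter fun k : Fin (n + 1) → Bool => k 0 = false,
    (-1 : ℤ) ^ wt k • F (fun i => ract (u i) (GK φ (fun j => if k j then g j else 1) i))

lemma face_pos (hφ : ∀ g : G, φ g ∈ Subgroup.center G) {n : ℕ} (F : (Fin (n + 1) → M) → A)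
    (g : Fin (n + 2) → G) (u : Fin (n + 2) → M) (p : Fin (n + 2)) (hp : p ≠ 0) :
    ∑ k ∈ Finset.univ.filter (fun k : Fin (n + 2) → Bool => k 0 = false),
      (-1 : ℤ) ^ wt k • F (dMmer (n + 1) p
        (fun i => ract (u i) (GK φ (fun j => if k j then g j else 1) i))) =
    Psi φ F (dGdel (n + 1) p g) (dMmer (n + 1) p u) -
      Psi φ F (dGconj (n + 1) p g) (dMconj φ (n + 1) p g u) := by
  rw [sum_split' p hp]
  simp only [insert_ite, key_face φ hφ, Psi, ← Finset.sum_sub_distrib, ← smul_sub]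
  refine Finset.sum_congr rfl fun k _ => ?_
  simp only [Bool.false_eq_true, if_false, if_true, cj_one, dW_one, cj_ite]
  rfl

lemma face_zero (hφ : ∀ g : G, φ g ∈ Subgroup.center G) {n : ℕ} (F : (Fin (n + 1) → M) → A)
    (hF : ∀ m (a : G), F (fun i => ract (m i) a) = F m)
    (g : Fin (n + 2) → G) (u : Fin (n + 2) → M) :
    ∑ k ∈ Finset.univ.filter (fun k : Fin (n + 2) → Bool => k 0 = false),
      (-1 : ℤ) ^ wt k • F (dMmer (n + 1) 0
        (fun i => ract (u i) (GK φ (fun j => if k j then g j else 1) i))) = 0 := by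
  rw [sum_split0]
  simp only [insert_ite, key_face φ hφ]
  simp only [Bool.false_eq_true, if_false, cj_one, dW_one]
  rw [sum_split 0]
  refine Finset.sum_eq_zero fun k _ => ?_
  have := insert_ite (0 : Fin (n + 1)) (k := k) (g := fun j => g (Fin.succAbove 0 j))
  simp only [this]
  simp only [Bool.false_eq_true, if_false, if_true]
  rw [sub_eq_zero.2, smul_zero]
  rw [← hF _ (φ (g (Fin.succAbove 0 0)))]
  congr 1
  funext i
  rw [GK_cons φ (g _), ← ract_mul, Subgroup.mem_center_iff.1 (hφ _)]

lemma face_last {n : ℕ} (F : (Fin (n + 1) → M) → A)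
    (hF : ∀ m (a : G), F (fun i => ract (m i) a) = F m)
    (g : Fin (n + 2) → G) (u : Fin (n + 2) → M) :
    ∑ k ∈ Finset.univ.filter (fun k : Fin (n + 2) → Bool => k 0 = false),
      (-1 : ℤ) ^ wt k • F (fun i : Fin (n + 1) =>
        ract (u i.castSucc) (GK φ (fun j => if k j then g j else 1) i.castSucc)) = 0 := by
  rw [sum_split' (Fin.last _) (Fin.last_pos.ne')]
  refine Finset.sum_eq_zero fun k _ => ?_
  simp only [insert_ite, GK_snoc, Bool.false_eq_true, if_false, if_true, ract_mul, mul_one,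
    ract_one]
  rw [hF, sub_self, smul_zero]

lemma bru_zero (hφ : ∀ g : G, φ g ∈ Subgroup.center G) {n : ℕ} (F : (Fin (n + 1) → M) → A)
    (hF : ∀ m (a : G), F (fun i => ract (m i) a) = F m)
    (g : Fin (n + 2) → G) (u : Fin (n + 2) → M) :
    Psi φ F (dGdel (n + 1) 0 g) (dMmer (n + 1) 0 u) -
      Psi φ F (dGconj (n + 1) 0 g) (dMconj φ (n + 1) 0 g u) = 0 := by
  rw [sub_eq_zero]
  unfold Psi
  refine Finset.sum_congr rfl fun k _ => ?_
  congr 1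
  rw [← hF _ (φ (g 0))]
  congr 1
  funext i
  simp only [dMmer, dMconj, dGdel, dGconj, Fin.val_zero, Nat.not_lt_zero, if_false,
    Nat.add_eq_zero_iff, one_ne_zero, and_false, ← ract_mul, Fin.zero_succAbove]
  rw [Subgroup.mem_center_iff.1 (hφ _)]

lemma bru (hφ : ∀ g : G, φ g ∈ Subgroup.center G) {n : ℕ} (F : (Fin (n + 1) → M) → A)
    (hF : ∀ m (a : G), F (fun i => ract (m i) a) = F m)
    (hc : ∀ m : Fin (n + 2) → M, (∑ p : Fin (n + 2), (-1 : ℤ) ^ (p : ℕ) • F (dMmer (n + 1) p m)) +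
      (-1 : ℤ) ^ (n + 2) • F (fun j => m j.castSucc) = 0)
    (g : Fin (n + 2) → G) (u : Fin (n + 2) → M) :
    ∑ p : Fin (n + 2), (-1 : ℤ) ^ (p : ℕ) •
      (Psi φ F (dGdel (n + 1) p g) (dMmer (n + 1) p u) -
      Psi φ F (dGconj (n + 1) p g) (dMconj φ (n + 1) p g u)) = 0 := by
  have h1 : ∑ k ∈ Finset.univ.filter (fun k : Fin (n + 2) → Bool => k 0 = false),
      (-1 : ℤ) ^ wt k • ((∑ p : Fin (n + 2), (-1 : ℤ) ^ (p : ℕ) • F (dMmer (n + 1) p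
        (fun i => ract (u i) (GK φ (fun j => if k j then g j else 1) i)))) +
      (-1 : ℤ) ^ (n + 2) • F (fun j : Fin (n + 1) =>
        ract (u j.castSucc) (GK φ (fun j => if k j then g j else 1) j.castSucc))) = 0 := by
    refine Finset.sum_eq_zero fun k _ => ?_
    rw [hc (fun i => ract (u i) (GK φ (fun j => if k j then g j else 1) i)), smul_zero]
  simp only [smul_add, Finset.sum_add_distrib, Finset.smul_sum] at h1
  simp only [smul_comm ((-1 : ℤ) ^ wt _)] at h1
  rw [← Finset.smul_sum, face_last φ F hF, smul_zero, add_zero, Finset.sum_comm] at h1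
  rw [← h1]
  refine Finset.sum_congr rfl fun p _ => ?_
  rw [← Finset.smul_sum]
  congr 1
  by_cases hp : p = 0
  · subst hp
    rw [bru_zero φ hφ F hF, face_zero φ hφ F hF]
  · rw [face_pos φ hφ F g u p hp]

/-- successive differences -/
def uu {n : ℕ} (x : Fin n → M × G) : Fin n → M :=
  fun j => (x j).1 - if h : (j : ℕ) + 1 < n then (x ⟨(j : ℕ) + 1, h⟩).1 else 0

lemma uu_del {n : ℕ} (x : Fin (n + 1) → M × G) (p : Fin (n + 1)) :
    uu (fun j => x (p.succAbove j)) = dMmer n p (uu x) := by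
  funext j
  simp only [uu, dMmer, Fin.succAbove, Fin.lt_def, Fin.val_castSucc, Fin.val_succ]
  have hj := j.2
  have hp := p.2
  split_ifs <;> first | omega | (simp [Fin.succ, Fin.castSucc, Fin.castAdd, Fin.castLE])

lemma uu_conj {n : ℕ} (x : Fin (n + 1) → M × G) (p : Fin (n + 1)) :
    uu (fun j : Fin n => if (j : ℕ) < (p : ℕ) then under φ (x j.castSucc) (x p)
            else overOp φ (x j.succ) (x p)) = dMconj φ n p (fun j => (x j).2) (uu x) := by
  funext j
  simp only [uu, dMconj, Fin.val_castSucc, Fin.val_succ]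
  have hj := j.2
  by_cases h3 : (j : ℕ) + 1 = p
  · have : p = ⟨(j : ℕ) + 1, Nat.succ_lt_succ hj⟩ := Fin.ext h3.symm
    subst this
    split_ifs <;> first | omega | (simp [Fin.succ, Fin.castSucc, Fin.castAdd, Fin.castLE, under, overOp, ract_sub, ract_zero] <;> abel)
  split_ifs <;> first | omega | (simp [Fin.succ, Fin.castSucc, Fin.castAdd, Fin.castLE, under, overOp, ract_sub, ract_zero])

/-- If `f : C^{gp}_n(M;ℤ)_G → A` is a group `n`-cocycle (`f ∘ ∂^{gp}_{n+1} = 0`,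
the boundary of the coinvariant complex being expressed through representatives), then
`Φ_f = f ∘ ψ_n ∘ γ_n : C^{BR}_n(X;ℤ) → A` is a birack `n`-cocycle: `Φ_f ∘ ∂^{BR}_{n+1} = 0`.
(Here the Lean parameter `n` corresponds to the paper's degree `n+1 ≥ 1`.) -/
theorem birack_cocycle_of_group_cocycle (hφ : ∀ g : G, φ g ∈ Subgroup.center G) :
    ∀ (n : ℕ) (f : CgpG (G := G) (M := M) (n + 1) →+ A),
      f.comp ((QuotientAddGroup.mk' (coinvSub (G := G) (M := M) (n + 1))).comp
          (dgp (M := M) (n + 1))) = 0 →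
      ((f.comp (psiG φ n)).comp (gammaMap (n + 1))).comp (dBR φ (n + 1)) = 0 := by
  intro n f hf
  set F : (Fin (n + 1) → M) → A := fun m =>
    f (QuotientAddGroup.mk' (coinvSub (G := G) (M := M) (n + 1)) (FreeAbelianGroup.of m)) with hFd
  have hF : ∀ m (a : G), F (fun i => ract (m i) a) = F m := by
    intro m a
    simp only [hFd]
    congr 1
    rw [← sub_eq_zero, ← map_sub, QuotientAddGroup.mk'_apply, QuotientAddGroup.eq_zero_iff]
    exact AddSubgroup.subset_closure ⟨m, a, rfl⟩
  have hc : ∀ m : Fin (n + 2) → M,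
      (∑ p : Fin (n + 2), (-1 : ℤ) ^ (p : ℕ) • F (dMmer (n + 1) p m)) +
      (-1 : ℤ) ^ (n + 2) • F (fun j => m j.castSucc) = 0 := by
    intro m
    have := DFunLike.congr_fun hf (FreeAbelianGroup.of m)
    simp only [AddMonoidHom.comp_apply, dgp, FreeAbelianGroup.lift_apply_of, map_add, map_sum,
      map_zsmul, AddMonoidHom.zero_apply] at this
    exact this
  have hP : ∀ x : (Fin (n + 1) → G) × (Fin (n + 1) → M),
      f (psiG φ n (FreeAbelianGroup.of x)) = Psi φ F x.1 x.2 := by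
    intro x
    simp only [psiG, psiFree, AddMonoidHom.comp_apply, FreeAbelianGroup.lift_apply_of, psiVal,
      map_sum, map_zsmul, gki_eq]
    rfl
  ext x
  have := bru φ hφ F hF hc (fun j => (x j).2) (uu x)
  simp only [AddMonoidHom.comp_apply, dBR, FreeAbelianGroup.lift_apply_of, map_sum, map_zsmul,
    map_sub, gammaMap, hP, AddMonoidHom.zero_apply]
  rw [← this]
  refine Finset.sum_congr rfl fun p _ => ?_
  rw [← uu_del, ← uu_conj]
  congr 3
  funext j
  simp only [dGconj]
  split_ifs <;> rfl

end GAlex
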